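/- Suppose Assumptions A1 and A3 hold with slackness δ > 0, V > 0, all initial queue backlogs are zero, and a C(t)-approximate policy is run with C(t) ≤ C + Vε_V + Σ_l Z_l(t)ε_Z + Σ_k Q_k(t)ε_Q + Σ_m |H_m(t)|ε_H, where ε_Q < δ, ε_H < δ, and ε_Z + ε_H Σ_{m=1}^M β_{l,m} < δ for all l. Then for any designated time t_end > 0, the time averages over the first t_end slots satisfy: ȳ_l + g_l(x̄) ≤ (VC₃/(θ t_end))[1 + Σ_{m=1}^M β_{l,m}] for all l ∈ {1,…,L}; ā_k ≤ b̄_k + VC₃/(θ t_end) for all k ∈ {1,…,K}; and there exists ε ∈ ℝ^M with |ε_m| ≤ VC₃/(θ t_end) for all m such that x̄ + ε ∈ X; where θ = min[δ − ε_Q, δ − ε_H, (δ − ε_Z − ε_H β_sum)/(1 + β_sum)] with β_sum = max_l Σ_m β_{l,m}, and C₃ = √(D₁ + D₂ + D₃) with D₁ = [(B+C)/V + (y₀^max − y₀^min) + (f^max − f^min) + ε_V]², D₂ = 2Dθ²/V², D₃ = (2 z_max θ/V)√D₁, z_max being the maximum over all z_l^diff, q_k^diff, h_m^diff. -/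

import Mathlib

/-- The "drift-plus-penalty" expression `E_t(α,γ)` whose (approximate) per-slot
minimization defines the universal scheduling algorithm. -/
noncomputable def driftExpr {Act Ω : Type*} {K M L : ℕ}
    (ahat bhat : Fin K → Act → Ω → ℝ) (xhat : Fin M → Act → Ω → ℝ)
    (y0hat : Act → Ω → ℝ) (yhat : Fin L → Act → Ω → ℝ)
    (g : Fin L → (Fin M → ℝ) → ℝ) (f : (Fin M → ℝ) → ℝ) (V : ℝ)
    (w : Ω) (Zv : Fin L → ℝ) (Qv : Fin K → ℝ) (Hv : Fin M → ℝ)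
    (a : Act) (γ : Fin M → ℝ) : ℝ :=
  V * y0hat a w + V * f γ
    + ∑ l, Zv l * (yhat l a w + g l γ)
    + ∑ k, Qv k * (ahat k a w - bhat k a w)
    + ∑ m, Hv m * (γ m - xhat m a w)

lemma aux_q (q a b : ℝ) (hq : 0 ≤ q) (ha : 0 ≤ a) (hb : 0 ≤ b) :
    (max (q - b) 0 + a) ^ 2 ≤ q ^ 2 + (b ^ 2 + a ^ 2) + 2 * (q * (a - b)) := by
  rcases max_cases (q - b) 0 with ⟨h, h'⟩ | ⟨h, h'⟩ <;> rw [h]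
  · nlinarith [mul_nonneg ha hb]
  · nlinarith [mul_nonneg hq ha, sq_nonneg (q - b)]

lemma aux_z (z : ℝ) : (max z 0) ^ 2 ≤ z ^ 2 := by
  rcases max_cases z 0 with ⟨h, h'⟩ | ⟨h, h'⟩ <;> rw [h]
  nlinarith [sq_nonneg z]

lemma aux_sum_sq {n : ℕ} (u : Fin n → ℝ) (hu : ∀ i, 0 ≤ u i) :
    ∑ i, u i ^ 2 ≤ (∑ i, u i) ^ 2 := by
  exact Finset.sum_sq_le_sq_sum_of_nonneg (fun i _ => hu i)

/-- Boundedness of a sequence with negative drift outside a ball. -/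
lemma aux_drift (W S : ℕ → ℝ) (R θ : ℝ) (hR : 0 ≤ R) (hθ : 0 < θ) (hW0 : W 0 = 0)
    (hS : ∀ t, 0 ≤ S t) (hWS : ∀ t, W t ≤ S t ^ 2)
    (hd : ∀ t, W (t + 1) ≤ W t + 2 * (θ * R - θ * S t)) (t : ℕ) :
    W t ≤ R ^ 2 + 2 * θ * R := by
  induction t with
  | zero => rw [hW0]; positivity
  | succ n ih =>
    have h1 := hd n
    rcases le_or_gt R (S n) with h | h
    · nlinarith
    · have := hWS n
      have h2 : S n ^ 2 ≤ R ^ 2 := pow_le_pow_left₀ (hS n) h.le 2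
      have h3 := mul_nonneg hθ.le (hS n)
      nlinarith

lemma aux_three (a b c x y z : ℝ) (hx : 0 ≤ x) (hy : 0 ≤ y) (hz : 0 ≤ z)
    (h1 : a ≤ x ^ 2) (h2 : b ≤ y ^ 2) (h3 : c ≤ z ^ 2) : a + b + c ≤ (x + y + z) ^ 2 := by
  nlinarith [mul_nonneg hx hy, mul_nonneg hx hz, mul_nonneg hy hz]

set_option maxHeartbeats 2000000 in
/-- Theorem 2(b): under Assumptions A1 and A3 (Slater slackness `δ`), a
`C(t)`-approximate policy started from empty queues satisfies, for any `t_end > 0`,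
`ȳ_l + g_l(x̄) ≤ (VC₃/(θ t_end))[1 + Σ_m β_{l,m}]` for every `l`,
`ā_k ≤ b̄_k + VC₃/(θ t_end)` for every `k`, and there is `ε` with
`|ε_m| ≤ VC₃/(θ t_end)` such that `x̄ + ε ∈ X`. -/
theorem stmt_8
    {Ω Act : Type*} (ω : ℕ → Ω) (A : Ω → Set Act) (hAne : ∀ w, (A w).Nonempty)
    (K M L : ℕ) (hK : 0 < K) (hM : 0 < M) (hL : 0 < L)
    (ahat bhat : Fin K → Act → Ω → ℝ) (xhat : Fin M → Act → Ω → ℝ)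
    (y0hat : Act → Ω → ℝ) (yhat : Fin L → Act → Ω → ℝ)
    (amax bmax : Fin K → ℝ) (xmin xmax : Fin M → ℝ)
    (y0min y0max : ℝ) (ymin ymax : Fin L → ℝ)
    -- Assumption A1 (boundedness)
    (hA1a : ∀ (w : Ω) (a' : Act), a' ∈ A w → ∀ k, 0 ≤ ahat k a' w ∧ ahat k a' w ≤ amax k)
    (hA1b : ∀ (w : Ω) (a' : Act), a' ∈ A w → ∀ k, 0 ≤ bhat k a' w ∧ bhat k a' w ≤ bmax k)
    (hA1x : ∀ (w : Ω) (a' : Act), a' ∈ A w → ∀ m, xmin m ≤ xhat m a' w ∧ xhat m a' w ≤ xmax m)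
    (hA1y0 : ∀ (w : Ω) (a' : Act), a' ∈ A w → y0min ≤ y0hat a' w ∧ y0hat a' w ≤ y0max)
    (hA1y : ∀ (w : Ω) (a' : Act), a' ∈ A w → ∀ l, ymin l ≤ yhat l a' w ∧ yhat l a' w ≤ ymax l)
    -- the convex set X and the cost functions f, g_l on the box
    (X : Set (Fin M → ℝ)) (hX : Convex ℝ X)
    (f : (Fin M → ℝ) → ℝ) (g : Fin L → (Fin M → ℝ) → ℝ)
    (fmin fmax : ℝ) (gmin gmax : Fin L → ℝ) (β : Fin L → Fin M → ℝ)
    (hβ : ∀ l m, 0 ≤ β l m)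
    (hfconv : ConvexOn ℝ {x : Fin M → ℝ | ∀ m, xmin m ≤ x m ∧ x m ≤ xmax m} f)
    (hfcont : ContinuousOn f {x : Fin M → ℝ | ∀ m, xmin m ≤ x m ∧ x m ≤ xmax m})
    (hfbd : ∀ x ∈ {x : Fin M → ℝ | ∀ m, xmin m ≤ x m ∧ x m ≤ xmax m},
      fmin ≤ f x ∧ f x ≤ fmax)
    (hgconv : ∀ l, ConvexOn ℝ {x : Fin M → ℝ | ∀ m, xmin m ≤ x m ∧ x m ≤ xmax m} (g l))
    (hgcont : ∀ l, ContinuousOn (g l) {x : Fin M → ℝ | ∀ m, xmin m ≤ x m ∧ x m ≤ xmax m})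
    (hgbd : ∀ l, ∀ x ∈ {x : Fin M → ℝ | ∀ m, xmin m ≤ x m ∧ x m ≤ xmax m},
      gmin l ≤ g l x ∧ g l x ≤ gmax l)
    (hglip : ∀ (l : Fin L) (x y : Fin M → ℝ),
      (∀ m, xmin m ≤ x m ∧ x m ≤ xmax m) →
      (∀ m, xmin m ≤ x m + y m ∧ x m + y m ≤ xmax m) →
      g l (x + y) ≤ g l x + ∑ m, β l m * |y m|)
    -- Assumption A3 (Slater condition with slackness δ)
    (δ : ℝ) (hδ : 0 < δ)
    (hA3 : ∀ t, ∃ a' ∈ A (ω t),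
      (∀ l, yhat l a' (ω t) + g l (fun m => xhat m a' (ω t)) ≤ -δ) ∧
      (∀ k, ahat k a' (ω t) ≤ bhat k a' (ω t) - δ) ∧
      (∀ ε : Fin M → ℝ, (∀ m, |ε m| ≤ δ) →
        ((fun m => xhat m a' (ω t)) + ε) ∈ X) ∧
      (∀ m, xmin m + δ ≤ xhat m a' (ω t) ∧ xhat m a' (ω t) ≤ xmax m - δ))
    -- parameters and the constants B and D
    (V C B D : ℝ) (hV : 0 < V) (hC : 0 ≤ C)
    (hB : ∀ (t : ℕ) (a' : Act) (γ' : Fin M → ℝ), a' ∈ A (ω t) → γ' ∈ X →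
      (∀ m, xmin m ≤ γ' m ∧ γ' m ≤ xmax m) →
      (1 / 2) * ∑ l, (yhat l a' (ω t) + g l γ') ^ 2
        + (1 / 2) * ∑ k, ((bhat k a' (ω t)) ^ 2 + (ahat k a' (ω t)) ^ 2)
        + (1 / 2) * ∑ m, (γ' m - xhat m a' (ω t)) ^ 2 ≤ B)
    (hD : ∀ (t : ℕ) (a' : Act) (γ' : Fin M → ℝ), a' ∈ A (ω t) → γ' ∈ X →
      (∀ m, xmin m ≤ γ' m ∧ γ' m ≤ xmax m) →
      (1 / 2) * ∑ l, max (|ymax l + gmax l|) (|ymin l + gmin l|)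
          * |yhat l a' (ω t) + g l γ'|
        + ∑ m, (xmax m - xmin m) * |xhat m a' (ω t) - γ' m|
        + (1 / 2) * ∑ k, max (bmax k) (amax k)
          * max (bhat k a' (ω t)) (ahat k a' (ω t)) ≤ D)
    -- approximation error constants
    (εV εZ εQ εH : ℝ) (hεV : 0 ≤ εV) (hεZ : 0 ≤ εZ) (hεQ : 0 ≤ εQ) (hεH : 0 ≤ εH)
    (hεQδ : εQ < δ) (hεHδ : εH < δ)
    (hεZδ : ∀ l, εZ + εH * ∑ m, β l m < δ)
    -- the C(t)-approximate policy and the queues (initially empty)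
    (α : ℕ → Act) (γ : ℕ → Fin M → ℝ)
    (hα : ∀ t, α t ∈ A (ω t)) (hγX : ∀ t, γ t ∈ X)
    (hγbox : ∀ t m, xmin m ≤ γ t m ∧ γ t m ≤ xmax m)
    (Q : Fin K → ℕ → ℝ) (Z : Fin L → ℕ → ℝ) (H : Fin M → ℕ → ℝ)
    (hQ0 : ∀ k, Q k 0 = 0) (hZ0 : ∀ l, Z l 0 = 0) (hH0 : ∀ m, H m 0 = 0)
    (hQ : ∀ k t, Q k (t + 1) = max (Q k t - bhat k (α t) (ω t)) 0 + ahat k (α t) (ω t))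
    (hZ : ∀ l t, Z l (t + 1) = max (Z l t + yhat l (α t) (ω t) + g l (γ t)) 0)
    (hH : ∀ m t, H m (t + 1) = H m t + γ t m - xhat m (α t) (ω t))
    (Ct : ℕ → ℝ)
    (hCt : ∀ t, Ct t ≤ C + V * εV + (∑ l, Z l t * εZ) + (∑ k, Q k t * εQ)
        + (∑ m, |H m t| * εH))
    (hCapprox : ∀ (t : ℕ) (a' : Act) (γ' : Fin M → ℝ), a' ∈ A (ω t) → γ' ∈ X →
      (∀ m, xmin m ≤ γ' m ∧ γ' m ≤ xmax m) →
      driftExpr ahat bhat xhat y0hat yhat g f V (ω t)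
          (fun l => Z l t) (fun k => Q k t) (fun m => H m t) (α t) (γ t)
        ≤ driftExpr ahat bhat xhat y0hat yhat g f V (ω t)
          (fun l => Z l t) (fun k => Q k t) (fun m => H m t) a' γ' + Ct t)
    -- derived constants
    (βsum : ℝ) (hβsum : IsGreatest {x : ℝ | ∃ l, x = ∑ m, β l m} βsum)
    (zmax : ℝ)
    (hzmax : IsGreatest {x : ℝ |
        (∃ l, x = max (|ymax l + gmax l|) (|ymin l + gmin l|)) ∨
        (∃ k, x = max (bmax k) (amax k)) ∨
        (∃ m, x = xmax m - xmin m)} zmax)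
    (θ : ℝ)
    (hθ : θ = min (δ - εQ) (min (δ - εH) ((δ - εZ - εH * βsum) / (1 + βsum))))
    (D₁ D₂ D₃ C₃ : ℝ)
    (hD₁ : D₁ = ((B + C) / V + (y0max - y0min) + (fmax - fmin) + εV) ^ 2)
    (hD₂ : D₂ = 2 * D * θ ^ 2 / V ^ 2)
    (hD₃ : D₃ = 2 * zmax * θ / V * Real.sqrt D₁)
    (hC₃ : C₃ = Real.sqrt (D₁ + D₂ + D₃))
    (tend : ℕ) (htend : 0 < tend) :
    (∀ l, (∑ τ ∈ Finset.range tend, yhat l (α τ) (ω τ)) / tend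
        + g l (fun m => (∑ τ ∈ Finset.range tend, xhat m (α τ) (ω τ)) / tend)
        ≤ V * C₃ / (θ * tend) * (1 + ∑ m, β l m)) ∧
    (∀ k, (∑ τ ∈ Finset.range tend, ahat k (α τ) (ω τ)) / tend
        ≤ (∑ τ ∈ Finset.range tend, bhat k (α τ) (ω τ)) / tend
          + V * C₃ / (θ * tend)) ∧
    (∃ ε : Fin M → ℝ, (∀ m, |ε m| ≤ V * C₃ / (θ * tend)) ∧
      ((fun m => (∑ τ ∈ Finset.range tend, xhat m (α τ) (ω τ)) / tend) + ε) ∈ X) := by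
  have hzl : ∀ l t, 0 ≤ Z l t := by
    intro l t
    cases t with
    | zero => rw [hZ0]
    | succ n => rw [hZ]; exact le_max_right _ _
  have hql : ∀ k t, 0 ≤ Q k t := by
    intro k t
    cases t with
    | zero => rw [hQ0]
    | succ n => rw [hQ]; exact add_nonneg (le_max_right _ _) (hA1a _ _ (hα n) k).1
  obtain ⟨⟨l0, hl0⟩, hβub⟩ := hβsum
  have hβle : ∀ l, ∑ m, β l m ≤ βsum := fun l => hβub ⟨l, rfl⟩
  have hβs0 : ∀ l, 0 ≤ ∑ m, β l m := fun l => Finset.sum_nonneg fun m _ => hβ l m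
  have hβ0 : 0 ≤ βsum := by rw [hl0]; exact hβs0 l0
  have hθ1 : θ ≤ δ - εQ := by rw [hθ]; exact min_le_left _ _
  have hθ2 : θ ≤ δ - εH := by
    rw [hθ]; exact (min_le_right _ _).trans (min_le_left _ _)
  have hθ3 : θ ≤ (δ - εZ - εH * βsum) / (1 + βsum) := by
    rw [hθ]; exact (min_le_right _ _).trans (min_le_right _ _)
  have hθpos : 0 < θ := by
    rw [hθ]
    refine lt_min (by linarith) (lt_min (by linarith) (div_pos ?_ (by linarith)))
    have := hεZδ l0
    rw [← hl0] at this
    linarith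
  rw [le_div_iff₀ (by linarith)] at hθ3
  have hθz : ∀ l, (θ + εH) * ∑ m, β l m ≤ δ - εZ - θ := by
    intro l
    have := mul_le_mul_of_nonneg_left (hβle l) (by linarith : 0 ≤ θ + εH)
    nlinarith
  -- zmax and θ
  have hzθ : θ ≤ zmax := by
    obtain ⟨a', -, -, -, -, hx⟩ := hA3 0
    have h1 := hx ⟨0, hM⟩
    have h2 : xmax ⟨0, hM⟩ - xmin ⟨0, hM⟩ ≤ zmax := hzmax.2 (Or.inr (Or.inr ⟨_, rfl⟩))
    linarith
  have hD0 : 0 ≤ D := by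
    refine le_trans ?_ (hD 0 (α 0) (γ 0) (hα 0) (hγX 0) (hγbox 0))
    have h1 : 0 ≤ ∑ l, max (|ymax l + gmax l|) (|ymin l + gmin l|)
          * |yhat l (α 0) (ω 0) + g l (γ 0)| :=
      Finset.sum_nonneg fun l _ => mul_nonneg (le_max_of_le_left (abs_nonneg _)) (abs_nonneg _)
    have h2 : 0 ≤ ∑ m, (xmax m - xmin m) * |xhat m (α 0) (ω 0) - γ 0 m| :=
      Finset.sum_nonneg fun m _ => mul_nonneg
        (by have := hγbox 0 m; linarith) (abs_nonneg _)
    have h3 : 0 ≤ ∑ k, max (bmax k) (amax k)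
          * max (bhat k (α 0) (ω 0)) (ahat k (α 0) (ω 0)) :=
      Finset.sum_nonneg fun k _ => by
        have := hA1a _ _ (hα 0) k
        exact mul_nonneg (le_max_of_le_right (by linarith)) (le_max_of_le_right this.1)
    linarith
  have hB0 : 0 ≤ B := by
    refine le_trans ?_ (hB 0 (α 0) (γ 0) (hα 0) (hγX 0) (hγbox 0))
    positivity
  set P : ℝ := (B + C) / V + (y0max - y0min) + (fmax - fmin) + εV with hP
  have hP0 : 0 ≤ P := by
    have h1 := hA1y0 _ _ (hα 0)
    have h2 := hfbd (γ 0) (hγbox 0)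
    have h3 : 0 ≤ (B + C) / V := by positivity
    rw [hP]; linarith
  have hVP : V * P = B + C + V * (y0max - y0min) + V * (fmax - fmin) + V * εV := by
    rw [hP]; field_simp
  have hsq : Real.sqrt D₁ = P := by rw [hD₁]; exact Real.sqrt_sq hP0
  set R : ℝ := V * P / θ with hRdef
  have hR0 : 0 ≤ R := by positivity
  have hθR : θ * R = V * P := by rw [hRdef]; field_simp
  let S : ℕ → ℝ := fun t => ∑ l, Z l t + ∑ k, Q k t + ∑ m, |H m t|
  let W : ℕ → ℝ := fun t => ∑ l, Z l t ^ 2 + ∑ k, Q k t ^ 2 + ∑ m, H m t ^ 2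
  have hW0 : W 0 = 0 := by simp [W, hZ0, hQ0, hH0]
  have hS1 : ∀ t, 0 ≤ ∑ l, Z l t := fun t => Finset.sum_nonneg fun l _ => hzl l t
  have hS2 : ∀ t, 0 ≤ ∑ k, Q k t := fun t => Finset.sum_nonneg fun k _ => hql k t
  have hS3 : ∀ t, 0 ≤ ∑ m, |H m t| := fun t => Finset.sum_nonneg fun m _ => abs_nonneg _
  have hS : ∀ t, 0 ≤ S t := fun t => add_nonneg (add_nonneg (hS1 t) (hS2 t)) (hS3 t)
  have hWS : ∀ t, W t ≤ S t ^ 2 := by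
    intro t
    have h1 := aux_sum_sq (fun l => Z l t) (fun l => hzl l t)
    have h2 := aux_sum_sq (fun k => Q k t) (fun k => hql k t)
    have h3 := aux_sum_sq (fun m => |H m t|) (fun m => abs_nonneg _)
    simp only [sq_abs] at h3
    exact aux_three _ _ _ _ _ _ (hS1 t) (hS2 t) (hS3 t) h1 h2 h3
  have hd : ∀ t, W (t + 1) ≤ W t + 2 * (θ * R - θ * S t) := by
    intro t
    have d1 : ∑ l, Z l (t + 1) ^ 2 ≤ ∑ l, Z l t ^ 2 + ∑ l, (yhat l (α t) (ω t) + g l (γ t)) ^ 2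
        + 2 * ∑ l, Z l t * (yhat l (α t) (ω t) + g l (γ t)) := by
      rw [Finset.mul_sum, ← Finset.sum_add_distrib, ← Finset.sum_add_distrib]
      refine Finset.sum_le_sum fun l _ => ?_
      rw [hZ]
      refine (aux_z _).trans (le_of_eq ?_)
      ring
    have d2 : ∑ k, Q k (t + 1) ^ 2 ≤ ∑ k, Q k t ^ 2
        + ∑ k, ((bhat k (α t) (ω t)) ^ 2 + (ahat k (α t) (ω t)) ^ 2)
        + 2 * ∑ k, Q k t * (ahat k (α t) (ω t) - bhat k (α t) (ω t)) := by
      rw [Finset.mul_sum, ← Finset.sum_add_distrib, ← Finset.sum_add_distrib]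
      refine Finset.sum_le_sum fun k _ => ?_
      rw [hQ]
      exact aux_q _ _ _ (hql k t) (hA1a _ _ (hα t) k).1 (hA1b _ _ (hα t) k).1
    have d3 : ∑ m, H m (t + 1) ^ 2 = ∑ m, H m t ^ 2
        + ∑ m, (γ t m - xhat m (α t) (ω t)) ^ 2
        + 2 * ∑ m, H m t * (γ t m - xhat m (α t) (ω t)) := by
      rw [Finset.mul_sum, ← Finset.sum_add_distrib, ← Finset.sum_add_distrib]
      refine Finset.sum_congr rfl fun m _ => ?_
      rw [hH]
      ring
    have hBt := hB t (α t) (γ t) (hα t) (hγX t) (hγbox t)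
    obtain ⟨a', ha', s1, s2, s3, s4⟩ := hA3 t
    let σ : Fin M → ℝ := fun m => if 0 ≤ H m t then -(θ + εH) else θ + εH
    have hσ : ∀ m, |σ m| = θ + εH := by
      intro m
      simp only [σ]
      split_ifs
      · rw [abs_neg, abs_of_nonneg (by linarith)]
      · rw [abs_of_nonneg (by linarith)]
    have hσH : ∀ m, H m t * σ m = -(θ + εH) * |H m t| := by
      intro m
      simp only [σ]
      split_ifs with h
      · rw [abs_of_nonneg h]; ring
      · rw [abs_of_neg (not_le.mp h)]; ring
    have hσX := s3 σ (fun m => by rw [hσ]; linarith)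
    have hσbox : ∀ m, xmin m ≤ xhat m a' (ω t) + σ m ∧ xhat m a' (ω t) + σ m ≤ xmax m := by
      intro m
      have h1 := s4 m
      have h2 := abs_le.mp (hσ m).le
      constructor <;> linarith
    have happ := hCapprox t a' _ ha' hσX hσbox
    have hct := hCt t
    have e1 := (hA1y0 _ _ (hα t)).1
    have e2 := (hfbd (γ t) (hγbox t)).1
    have e3 := (hA1y0 _ _ ha').2
    have e4 := (hfbd _ hσbox).2
    change f ((fun m => xhat m a' (ω t)) + σ) ≤ fmax at e4
    have e5 : ∑ l, Z l t * (yhat l a' (ω t) + g l ((fun m => xhat m a' (ω t)) + σ))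
        ≤ ∑ l, Z l t * (-(θ + εZ)) := by
      refine Finset.sum_le_sum fun l _ => mul_le_mul_of_nonneg_left ?_ (hzl l t)
      have h1 := hglip l (fun m => xhat m a' (ω t)) σ (hA1x _ _ ha') hσbox
      have h2 : ∑ m, β l m * |σ m| = (θ + εH) * ∑ m, β l m := by
        rw [Finset.mul_sum]
        refine Finset.sum_congr rfl fun m _ => ?_
        rw [hσ]; ring
      have h3 := s1 l
      have h4 := hθz l
      linarith
    have e6 : ∑ k, Q k t * (ahat k a' (ω t) - bhat k a' (ω t))
        ≤ ∑ k, Q k t * (-(θ + εQ)) := by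
      refine Finset.sum_le_sum fun k _ => mul_le_mul_of_nonneg_left ?_ (hql k t)
      have h3 := s2 k
      linarith
    have e7 : ∑ m, H m t * (((fun m => xhat m a' (ω t)) + σ) m - xhat m a' (ω t))
        = -(θ + εH) * ∑ m, |H m t| := by
      rw [Finset.mul_sum]
      refine Finset.sum_congr rfl fun m _ => ?_
      rw [← hσH, Pi.add_apply]; ring
    unfold driftExpr at happ
    simp only [← Finset.sum_mul] at hct e5 e6
    have v1 := mul_le_mul_of_nonneg_left e1 hV.le
    have v2 := mul_le_mul_of_nonneg_left e2 hV.le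
    have v3 := mul_le_mul_of_nonneg_left e3 hV.le
    have v4 := mul_le_mul_of_nonneg_left e4 hV.le
    rw [hθR, hVP]
    simp only [W, S]
    linarith
  have hWb := aux_drift W S R θ hR0 hθpos hW0 hS hWS hd tend
  set G : ℝ := V * C₃ / θ with hG
  have hC3 : 0 ≤ C₃ := by rw [hC₃]; exact Real.sqrt_nonneg _
  have hG0 : 0 ≤ G := by positivity
  have hzm0 : 0 ≤ zmax := hθpos.le.trans hzθ
  have hG2 : W tend ≤ G ^ 2 := by
    have h1 : C₃ ^ 2 = P ^ 2 + 2 * D * θ ^ 2 / V ^ 2 + 2 * zmax * θ / V * P := by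
      rw [hC₃, Real.sq_sqrt, hD₁, hD₂, hD₃, hsq]
      rw [hD₂, hD₃, hsq, hD₁]
      positivity
    have h2 : G ^ 2 = R ^ 2 + 2 * D + 2 * zmax * R := by
      rw [hG, div_pow, mul_pow, h1, hRdef]
      field_simp
    have := mul_le_mul_of_nonneg_right hzθ hR0
    nlinarith
  have n1 : 0 ≤ ∑ l, Z l tend ^ 2 := by positivity
  have n2 : 0 ≤ ∑ k, Q k tend ^ 2 := by positivity
  have n3 : 0 ≤ ∑ m, H m tend ^ 2 := by positivity
  have hGZ : ∀ l, Z l tend ≤ G := fun l => by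
    refine le_of_sq_le_sq ?_ hG0
    have := Finset.single_le_sum (f := fun l => Z l tend ^ 2) (fun i _ => sq_nonneg _)
      (Finset.mem_univ l)
    simp only [W] at hG2
    linarith
  have hGQ : ∀ k, Q k tend ≤ G := fun k => by
    refine le_of_sq_le_sq ?_ hG0
    have := Finset.single_le_sum (f := fun k => Q k tend ^ 2) (fun i _ => sq_nonneg _)
      (Finset.mem_univ k)
    simp only [W] at hG2
    linarith
  have hGH : ∀ m, |H m tend| ≤ G := fun m => by
    refine abs_le_of_sq_le_sq ?_ hG0
    have := Finset.single_le_sum (f := fun m => H m tend ^ 2) (fun i _ => sq_nonneg _)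
      (Finset.mem_univ m)
    simp only [W] at hG2
    linarith
  have hT : (0 : ℝ) < tend := by exact_mod_cast htend
  have hGT : V * C₃ / (θ * tend) = G / tend := by rw [hG, div_div]
  rw [hGT]
  have hZs : ∀ l n, ∑ τ ∈ Finset.range n, yhat l (α τ) (ω τ)
      + ∑ τ ∈ Finset.range n, g l (γ τ) ≤ Z l n := by
    intro l n
    induction n with
    | zero => simp [hZ0]
    | succ n ih =>
      rw [Finset.sum_range_succ, Finset.sum_range_succ, hZ]
      refine le_trans ?_ (le_max_left _ _)
      linarith
  have hQs : ∀ k n, ∑ τ ∈ Finset.range n, ahat k (α τ) (ω τ)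
      - ∑ τ ∈ Finset.range n, bhat k (α τ) (ω τ) ≤ Q k n := by
    intro k n
    induction n with
    | zero => simp [hQ0]
    | succ n ih =>
      rw [Finset.sum_range_succ, Finset.sum_range_succ, hQ]
      have := le_max_left (Q k n - bhat k (α n) (ω n)) 0
      linarith
  have hHs : ∀ m n, H m n = ∑ τ ∈ Finset.range n, γ τ m
      - ∑ τ ∈ Finset.range n, xhat m (α τ) (ω τ) := by
    intro m n
    induction n with
    | zero => simp [hH0]
    | succ n ih =>
      rw [Finset.sum_range_succ, Finset.sum_range_succ, hH, ih]
      ring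
  -- averages
  set xb : Fin M → ℝ := fun m => (∑ τ ∈ Finset.range tend, xhat m (α τ) (ω τ)) / tend with hxb
  let γb : Fin M → ℝ := ∑ τ ∈ Finset.range tend, (1 / (tend : ℝ)) • γ τ
  have hγb : ∀ m, γb m = (∑ τ ∈ Finset.range tend, γ τ m) / tend := by
    intro m
    simp only [γb, Finset.sum_apply, Pi.smul_apply, smul_eq_mul]
    rw [← Finset.mul_sum]; ring
  have hw0 : ∀ τ ∈ Finset.range tend, (0 : ℝ) ≤ 1 / (tend : ℝ) := fun _ _ => by positivity
  have hw1 : ∑ τ ∈ Finset.range tend, 1 / (tend : ℝ) = 1 := by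
    simp only [Finset.sum_const, Finset.card_range, nsmul_eq_mul]
    field_simp
  have hγbX : γb ∈ X := hX.sum_mem hw0 hw1 (fun τ _ => hγX τ)
  have hγbbox : γb ∈ {x : Fin M → ℝ | ∀ m, xmin m ≤ x m ∧ x m ≤ xmax m} :=
    hfconv.1.sum_mem hw0 hw1 (fun τ _ => hγbox τ)
  have hxbbox : ∀ m, xmin m ≤ xb m ∧ xb m ≤ xmax m := by
    have h : (∑ τ ∈ Finset.range tend, (1 / (tend : ℝ)) • (fun m => xhat m (α τ) (ω τ)))
        ∈ {x : Fin M → ℝ | ∀ m, xmin m ≤ x m ∧ x m ≤ xmax m} :=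
      hfconv.1.sum_mem hw0 hw1 (fun τ _ => hA1x _ _ (hα τ))
    have h' : xb = ∑ τ ∈ Finset.range tend, (1 / (tend : ℝ)) • (fun m => xhat m (α τ) (ω τ)) := by
      funext m
      simp only [hxb, Finset.sum_apply, Pi.smul_apply, smul_eq_mul]
      rw [← Finset.mul_sum]; ring
    rw [h']; exact h
  have hdiff : ∀ m, γb m - xb m = H m tend / tend := by
    intro m
    rw [hγb, hHs]; ring
  have habs : ∀ m, |γb m - xb m| ≤ G / tend := by
    intro m
    rw [hdiff, abs_div, abs_of_pos hT]
    exact div_le_div_of_nonneg_right (hGH m) hT.le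
  refine ⟨fun l => ?_, fun k => ?_, fun m => γb m - xb m, habs, ?_⟩
  · have h1 := (hgconv l).map_sum_le hw0 hw1 (fun τ _ => hγbox τ)
    change g l γb ≤ _ at h1
    have h2 := hglip l γb (xb - γb) hγbbox (by
      intro m
      rw [Pi.sub_apply, add_sub_cancel]
      exact hxbbox m)
    rw [add_sub_cancel] at h2
    have h3 : ∑ m, β l m * |(xb - γb) m| ≤ (∑ m, β l m) * (G / tend) := by
      rw [Finset.sum_mul]
      refine Finset.sum_le_sum fun m _ => mul_le_mul_of_nonneg_left ?_ (hβ l m)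
      rw [Pi.sub_apply, abs_sub_comm]
      exact habs m
    have h4 := div_le_div_of_nonneg_right ((hZs l tend).trans (hGZ l)) hT.le
    simp only [smul_eq_mul] at h1
    rw [← Finset.mul_sum, one_div_mul_eq_div] at h1
    rw [add_div] at h4
    linarith
  · have h4 := div_le_div_of_nonneg_right ((hQs k tend).trans (hGQ k)) hT.le
    rw [sub_div] at h4
    linarith
  · have : xb + (fun m => γb m - xb m) = γb := by
      funext m
      simp
    rw [this]; exact hγbX
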